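/- Define two Boolean functions f, g : (Fin 4 → Bool) → Bool to be NPN-equivalent if there exist a permutation σ of Fin 4, a vector a : Fin 4 → Bool, and a bit b : Bool such that for all x, g x = xor (f (fun i => xor (x (σ i)) (a i))) b. NPN-equivalence is an equivalence relation on the 65536 Boolean functions of 4 variables, and the number of NPN-equivalence classes is exactly 222. -/

import Mathlib

/-- NPN equivalence of Boolean functions on 4 variables: `g` is obtained from `f` by
permuting inputs, negating a subset of inputs, and possibly negating the output. -/
def NPNEquiv4 (f g : (Fin 4 → Bool) → Bool) : Prop :=
  ∃ σ : Equiv.Perm (Fin 4), ∃ a : Fin 4 → Bool, ∃ b : Bool,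
    ∀ x : Fin 4 → Bool, g x = xor (f (fun i => xor (x (σ i)) (a i))) b

/-! ### The NPN group acting on Boolean functions -/

/-- Elements `(σ, a, b)` of the NPN group. -/
@[ext] structure NPNGrp where
  perm : Equiv.Perm (Fin 4)
  mask : Fin 4 → Bool
  out : Bool

namespace NPNGrp

instance : Mul NPNGrp :=
  ⟨fun u v => ⟨u.perm * v.perm, fun i => xor (u.mask (v.perm i)) (v.mask i), xor u.out v.out⟩⟩
instance : One NPNGrp := ⟨⟨1, fun _ => false, false⟩⟩
instance : Inv NPNGrp := ⟨fun u => ⟨u.perm⁻¹, fun i => u.mask (u.perm⁻¹ i), u.out⟩⟩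

@[simp] theorem mul_perm (u v : NPNGrp) : (u * v).perm = u.perm * v.perm := rfl
@[simp] theorem mul_mask (u v : NPNGrp) (i : Fin 4) :
    (u * v).mask i = xor (u.mask (v.perm i)) (v.mask i) := rfl
@[simp] theorem mul_out (u v : NPNGrp) : (u * v).out = xor u.out v.out := rfl
@[simp] theorem one_perm : (1 : NPNGrp).perm = 1 := rfl
@[simp] theorem one_mask (i : Fin 4) : (1 : NPNGrp).mask i = false := rfl
@[simp] theorem one_out : (1 : NPNGrp).out = false := rfl
@[simp] theorem inv_perm (u : NPNGrp) : (u⁻¹).perm = u.perm⁻¹ := rfl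
@[simp] theorem inv_mask (u : NPNGrp) (i : Fin 4) : (u⁻¹).mask i = u.mask (u.perm⁻¹ i) := rfl
@[simp] theorem inv_out (u : NPNGrp) : (u⁻¹).out = u.out := rfl

instance : Group NPNGrp := Group.ofLeftAxioms
  (by intro u v w; ext <;> simp [mul_assoc])
  (by intro u; ext <;> simp)
  (by intro u; ext <;> simp)

instance : MulAction NPNGrp ((Fin 4 → Bool) → Bool) where
  smul u f := fun x => xor (f (fun i => xor (x (u.perm i)) (u.mask i))) u.out
  one_smul f := by
    funext x
    change xor (f (fun i => xor (x ((1 : NPNGrp).perm i)) ((1 : NPNGrp).mask i))) false = f x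
    simp
  mul_smul u v f := by
    funext x
    change xor (f (fun i => xor (x ((u * v).perm i)) ((u * v).mask i))) (u * v).out =
      xor (xor (f (fun i => xor (xor (x (u.perm (v.perm i))) (u.mask (v.perm i))) (v.mask i)))
        v.out) u.out
    simp only [mul_perm, mul_mask, mul_out, Equiv.Perm.mul_apply, Bool.xor_assoc,
      Bool.xor_comm u.out]

theorem smul_apply (u : NPNGrp) (f : (Fin 4 → Bool) → Bool) (x : Fin 4 → Bool) :
    (u • f) x = xor (f (fun i => xor (x (u.perm i)) (u.mask i))) u.out := rfl

/-- The group as a product type. -/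
def toProd : NPNGrp ≃ Equiv.Perm (Fin 4) × (Fin 4 → Bool) × Bool where
  toFun u := (u.perm, u.mask, u.out)
  invFun p := ⟨p.1, p.2.1, p.2.2⟩
  left_inv _ := rfl
  right_inv _ := rfl

instance : Fintype NPNGrp := Fintype.ofEquiv _ toProd.symm

theorem card_eq : Fintype.card NPNGrp = 768 := by
  rw [Fintype.card_congr toProd]
  simp [Fintype.card_perm, Nat.factorial]

end NPNGrp

theorem npn_iff_mem_orbit (f g : (Fin 4 → Bool) → Bool) :
    NPNEquiv4 f g ↔ g ∈ MulAction.orbit NPNGrp f := by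
  constructor
  · rintro ⟨σ, a, b, h⟩
    exact ⟨⟨σ, a, b⟩, funext fun x => (h x).symm⟩
  · rintro ⟨u, rfl⟩
    exact ⟨u.perm, u.mask, u.out, fun x => rfl⟩

theorem npn_equivalence : Equivalence NPNEquiv4 where
  refl f := (npn_iff_mem_orbit f f).2 (MulAction.mem_orbit_self f)
  symm {f g} h := by
    rw [npn_iff_mem_orbit] at h ⊢
    exact MulAction.mem_orbit_symm.1 h
  trans {f g k} h h' := by
    rw [npn_iff_mem_orbit] at h h' ⊢
    rw [← MulAction.orbit_eq_iff] at h h' ⊢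
    exact h'.trans h

/-! ### Counting solutions of `f (τ x) = f x + b` -/

theorem iterate_fixed {X : Type*} (τ : X → X) (b : Bool) (f : X → Bool)
    (hf : ∀ x, xor (f (τ x)) b = f x) (n : ℕ) (x : X) :
    xor (f (τ^[n] x)) (b && n % 2 == 1) = f x := by
  induction n generalizing x with
  | zero => simp
  | succ n ih =>
    rw [Function.iterate_succ_apply, ← hf x, ← ih (τ x)]
    rcases Nat.mod_two_eq_zero_or_one n with h | h <;>
      simp [Nat.add_mod, h]

theorem card_fixed {X : Type*} [Fintype X] [DecidableEq X] (τ : X → X) (b : Bool) (k : X → ℕ)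
    (h0 : ∀ x, k (τ^[k x] x) = 0)
    (h1 : ∀ x, τ^[k (τ x)] (τ x) = τ^[k x] x)
    (h2 : ∀ x, xor (b && k (τ x) % 2 == 1) b = (b && k x % 2 == 1)) :
    Nat.card {f : X → Bool // ∀ x, xor (f (τ x)) b = f x} =
      2 ^ Fintype.card {x // k x = 0} := by
  let e : {f : X → Bool // ∀ x, xor (f (τ x)) b = f x} ≃ ({x // k x = 0} → Bool) :=
    { toFun := fun f x => f.1 x.1
      invFun := fun h => ⟨fun x => xor (h ⟨τ^[k x] x, h0 x⟩) (b && k x % 2 == 1), by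
        intro x
        have : (⟨τ^[k (τ x)] (τ x), h0 (τ x)⟩ : {x // k x = 0}) = ⟨τ^[k x] x, h0 x⟩ :=
          Subtype.ext (h1 x)
        simp only [this, Bool.xor_assoc, h2 x]⟩
      left_inv := by
        rintro ⟨f, hf⟩
        apply Subtype.ext
        funext x
        exact iterate_fixed τ b f hf (k x) x
      right_inv := by
        intro h
        funext ⟨x, hx⟩
        simp [hx] }
  rw [Nat.card_congr e, Nat.card_eq_fintype_card]
  simp

theorem card_fixed_zero {X : Type*} (τ : X → X) (n : ℕ) (x : X)
    (hn : n % 2 = 1) (hx : τ^[n] x = x) :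
    Nat.card {f : X → Bool // ∀ x, xor (f (τ x)) true = f x} = 0 := by
  have : IsEmpty {f : X → Bool // ∀ x, xor (f (τ x)) true = f x} := by
    refine ⟨fun ⟨f, hf⟩ => ?_⟩
    have := iterate_fixed τ true f hf n x
    simp [hx, hn] at this
  exact Nat.card_of_isEmpty

/-! ### Coding the points of the cube by numbers below 16 -/

namespace NPNComp

/-- Binary code of a point. -/
def enc (x : Fin 4 → Bool) : ℕ :=
  (x 0).toNat + 2 * (x 1).toNat + 4 * (x 2).toNat + 8 * (x 3).toNat

/-- The map `x ↦ (x ∘ σ) + a` on codes. -/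
def step (s0 s1 s2 s3 a n : ℕ) : ℕ :=
  Nat.xor a ((n >>> s0) % 2 + 2 * ((n >>> s1) % 2) + 4 * ((n >>> s2) % 2) + 8 * ((n >>> s3) % 2))

/-- Application of `F` to `n`, arranged so that `n` is evaluated first. -/
def force {α : Type} (n : ℕ) (F : ℕ → α) : α :=
  Nat.rec (F 0) (fun m _ => F (m + 1)) n

theorem force_eq {α : Type} (n : ℕ) (F : ℕ → α) : force n F = F n := by
  cases n <;> rfl

/-- Iteration. -/
def iter (t : ℕ → ℕ) : ℕ → ℕ → ℕ
  | 0, n => n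
  | k + 1, n => force (t n) (iter t k)

/-- Search for the time at which the minimum of the cycle is reached. -/
def search (t : ℕ → ℕ) : ℕ → ℕ → ℕ → ℕ → ℕ → ℕ
  | 0, _, _, _, bestk => bestk
  | fuel + 1, k, cur, best, bestk =>
    force (t cur) fun next =>
      bif Nat.blt cur best then search t fuel (k + 1) next cur k
      else search t fuel (k + 1) next best bestk

/-- First time at which the minimum of the cycle of `n` is reached. -/
def time (t : ℕ → ℕ) (n : ℕ) : ℕ := search t 8 0 n 16 0

def codes : List ℕ := [0, 1, 2, 3, 4, 5, 6, 7, 8, 9, 10, 11, 12, 13, 14, 15]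

def good (t : ℕ → ℕ) : Bool :=
  codes.all fun n => force n fun n => force (t n) fun n' =>
    force (iter t (time t n) n) fun s =>
      Nat.beq (time t s) 0 && Nat.beq (iter t (time t n') n') s

def goodParity (t : ℕ → ℕ) : Bool :=
  codes.all fun n => force n fun n => force (t n) fun n' =>
    Nat.beq ((time t n' + time t n) % 2) 1

def bad (t : ℕ → ℕ) : Bool :=
  codes.any fun n => force n fun n => Nat.beq (iter t 1 n) n || Nat.beq (iter t 3 n) n

def numCycles (t : ℕ → ℕ) : ℕ :=
  (codes.map fun n => force n fun n => bif Nat.beq (time t n) 0 then 1 else 0).sum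

/-- Number of fixed functions of `(t, false)` and `(t, true)` together. -/
def total (t : ℕ → ℕ) : ℕ :=
  2 ^ numCycles t + bif goodParity t then 2 ^ numCycles t else 0

def valid (t : ℕ → ℕ) : Bool := good t && (goodParity t || bad t)

def perms : List (ℕ × ℕ × ℕ × ℕ) :=
  [(0,1,2,3),(0,1,3,2),(0,2,1,3),(0,2,3,1),(0,3,1,2),(0,3,2,1),
   (1,0,2,3),(1,0,3,2),(1,2,0,3),(1,2,3,0),(1,3,0,2),(1,3,2,0),
   (2,0,1,3),(2,0,3,1),(2,1,0,3),(2,1,3,0),(2,3,0,1),(2,3,1,0),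
   (3,0,1,2),(3,0,2,1),(3,1,0,2),(3,1,2,0),(3,2,0,1),(3,2,1,0)]

set_option maxRecDepth 100000 in
theorem all_valid : (perms.all fun s => codes.all fun a =>
    valid (step s.1 s.2.1 s.2.2.1 s.2.2.2 a)) = true := by
  decide +kernel

set_option maxRecDepth 100000 in
theorem total_sum : (perms.map fun s => (codes.map fun a =>
    total (step s.1 s.2.1 s.2.2.1 s.2.2.2 a)).sum).sum = 222 * 768 := by
  decide +kernel

/-- The map on the cube. -/
def move (σ : Equiv.Perm (Fin 4)) (a : Fin 4 → Bool) (x : Fin 4 → Bool) : Fin 4 → Bool :=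
  fun i => xor (x (σ i)) (a i)

/-- The coded map. -/
def stepOf (σ : Equiv.Perm (Fin 4)) (a : Fin 4 → Bool) : ℕ → ℕ :=
  step (σ 0).val (σ 1).val (σ 2).val (σ 3).val (enc a)

theorem enc_bit : ∀ (x : Fin 4 → Bool) (i : Fin 4),
    (enc x >>> i.val) % 2 = (x i).toNat := by decide +kernel

theorem enc_inj : ∀ x y : Fin 4 → Bool, enc x = enc y → x = y := by decide +kernel

theorem enc_mem : ∀ x : Fin 4 → Bool, enc x ∈ codes := by decide +kernel

theorem enc_xor : ∀ a y : Fin 4 → Bool,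
    enc (fun i => xor (y i) (a i)) = Nat.xor (enc a) (enc y) := by decide +kernel

theorem enc_move (σ : Equiv.Perm (Fin 4)) (a x : Fin 4 → Bool) :
    enc (move σ a x) = stepOf σ a (enc x) := by
  unfold move stepOf step
  rw [enc_xor a (fun i => x (σ i))]
  simp only [enc_bit]
  rfl

theorem enc_iter (σ : Equiv.Perm (Fin 4)) (a : Fin 4 → Bool) (k : ℕ) (x : Fin 4 → Bool) :
    enc ((move σ a)^[k] x) = iter (stepOf σ a) k (enc x) := by
  induction k generalizing x with
  | zero => rfl
  | succ k ih => rw [Function.iterate_succ_apply, ih, enc_move, iter, force_eq]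

theorem map_enc : (Finset.univ : Finset (Fin 4 → Bool)).val.map enc = (codes : Multiset ℕ) := by
  decide +kernel

theorem map_perms : (Finset.univ : Finset (Equiv.Perm (Fin 4))).val.map
    (fun σ => ((σ 0).val, (σ 1).val, (σ 2).val, (σ 3).val)) =
      (perms : Multiset (ℕ × ℕ × ℕ × ℕ)) := by
  decide +kernel

theorem sum_enc (F : ℕ → ℕ) : ∑ x : Fin 4 → Bool, F (enc x) = (codes.map F).sum := by
  have h := congrArg (fun m => (m.map F).sum) map_enc
  simp only [Multiset.map_map, Multiset.map_coe, Multiset.sum_coe] at h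
  exact h

theorem sum_perms (F : ℕ × ℕ × ℕ × ℕ → ℕ) :
    ∑ σ : Equiv.Perm (Fin 4), F ((σ 0).val, (σ 1).val, (σ 2).val, (σ 3).val) =
      (perms.map F).sum := by
  have h := congrArg (fun m => (m.map F).sum) map_perms
  simp only [Multiset.map_map, Multiset.map_coe, Multiset.sum_coe] at h
  exact h

theorem valid_stepOf (σ : Equiv.Perm (Fin 4)) (a : Fin 4 → Bool) : valid (stepOf σ a) = true := by
  have hm : ((σ 0).val, (σ 1).val, (σ 2).val, (σ 3).val) ∈ perms := by
    have := Multiset.mem_map_of_mem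
      (fun σ : Equiv.Perm (Fin 4) => ((σ 0).val, (σ 1).val, (σ 2).val, (σ 3).val))
      (Finset.mem_univ_val σ)
    rw [map_perms] at this
    exact this
  exact List.all_eq_true.1 (List.all_eq_true.1 all_valid _ hm) _ (enc_mem a)

theorem exists_enc : ∀ n ∈ codes, ∃ x, enc x = n := by decide +kernel

/-- Number of functions fixed by `(σ, a, b)`. -/
noncomputable def fixCard (σ : Equiv.Perm (Fin 4)) (a : Fin 4 → Bool) (b : Bool) : ℕ :=
  Nat.card {f : (Fin 4 → Bool) → Bool // ∀ x, xor (f (move σ a x)) b = f x}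

theorem fixCard_total (σ : Equiv.Perm (Fin 4)) (a : Fin 4 → Bool) :
    fixCard σ a false + fixCard σ a true = total (stepOf σ a) := by
  have hv := valid_stepOf σ a
  simp only [valid, Bool.and_eq_true, Bool.or_eq_true] at hv
  obtain ⟨hg, hp⟩ := hv
  set t := stepOf σ a with ht
  have hg' : ∀ x : Fin 4 → Bool, _ := fun x => List.all_eq_true.1 hg _ (enc_mem x)
  simp only [force_eq, Bool.and_eq_true, Nat.beq_eq] at hg'
  have h0 : ∀ x, time t (enc ((move σ a)^[time t (enc x)] x)) = 0 := by
    intro x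
    rw [enc_iter]
    exact (hg' x).1
  have h1 : ∀ x, (move σ a)^[time t (enc (move σ a x))] (move σ a x) =
      (move σ a)^[time t (enc x)] x := by
    intro x
    apply enc_inj
    rw [enc_iter, enc_iter, enc_move]
    exact (hg' x).2
  have hc : Fintype.card {x : Fin 4 → Bool // time t (enc x) = 0} = numCycles t := by
    rw [Fintype.card_subtype, Finset.card_filter, numCycles, ← sum_enc]
    refine Finset.sum_congr rfl fun x _ => ?_
    rw [force_eq]
    by_cases h : time t (enc x) = 0
    · simp [h]
    · have : Nat.beq (time t (enc x)) 0 = false := by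
        rw [Bool.eq_false_iff, ne_eq, Nat.beq_eq]; exact h
      rw [this]; simp [h]
  have e1 : fixCard σ a false = 2 ^ numCycles t := by
    rw [← hc]
    exact card_fixed (move σ a) false (fun x => time t (enc x)) h0 h1 (by simp)
  rw [e1, total]
  congr 1
  cases hpar : goodParity t with
  | true =>
    rw [cond_true, ← hc]
    refine card_fixed (move σ a) true (fun x => time t (enc x)) h0 h1 ?_
    intro x
    have := List.all_eq_true.1 hpar _ (enc_mem x)
    simp only [force_eq, Nat.beq_eq] at this
    simp only [enc_move, ← ht]
    rcases Nat.mod_two_eq_zero_or_one (time t (enc x)) with h | h <;>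
      rcases Nat.mod_two_eq_zero_or_one (time t (t (enc x))) with h' | h' <;>
      simp [h, h', Nat.add_mod] at this ⊢
  | false =>
    rw [cond_false]
    rw [hpar] at hp
    have hb : bad t = true := by simpa using hp
    obtain ⟨n, hn, hb⟩ := List.any_eq_true.1 hb
    obtain ⟨x, rfl⟩ := exists_enc n hn
    rw [force_eq, Bool.or_eq_true, Nat.beq_eq, Nat.beq_eq, ht, ← enc_iter, ← enc_iter] at hb
    rcases hb with h | h
    · exact card_fixed_zero _ 1 x rfl (enc_inj _ _ h)
    · exact card_fixed_zero _ 3 x rfl (enc_inj _ _ h)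

theorem sum_fixCard :
    ∑ σ : Equiv.Perm (Fin 4), ∑ a : Fin 4 → Bool, ∑ b : Bool, fixCard σ a b = 222 * 768 := by
  rw [← total_sum, ← sum_perms]
  refine Finset.sum_congr rfl fun σ _ => ?_
  rw [← sum_enc]
  refine Finset.sum_congr rfl fun a _ => ?_
  rw [Fintype.sum_bool, add_comm]
  exact fixCard_total σ a

end NPNComp

theorem card_orbits_npn :
    Nat.card (Quotient (MulAction.orbitRel NPNGrp ((Fin 4 → Bool) → Bool))) = 222 := by
  classical
  have h := MulAction.sum_card_fixedBy_eq_card_orbits_mul_card_group NPNGrp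
    ((Fin 4 → Bool) → Bool)
  rw [NPNGrp.card_eq] at h
  have h2 : ∑ u : NPNGrp, Fintype.card (MulAction.fixedBy ((Fin 4 → Bool) → Bool) u) =
      222 * 768 := by
    rw [← NPNComp.sum_fixCard, ← NPNGrp.toProd.symm.sum_comp, Fintype.sum_prod_type]
    refine Finset.sum_congr rfl fun σ _ => ?_
    rw [Fintype.sum_prod_type]
    refine Finset.sum_congr rfl fun a _ => Finset.sum_congr rfl fun b _ => ?_
    rw [← Nat.card_eq_fintype_card, NPNComp.fixCard]
    refine Nat.card_congr (Equiv.subtypeEquivRight fun f => ?_)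
    rw [MulAction.mem_fixedBy, funext_iff]
    rfl
  rw [h2] at h
  rw [Nat.card_eq_fintype_card]
  exact (Nat.eq_of_mul_eq_mul_right (by norm_num) h).symm

theorem npn4_equivalence_and_card_classes :
    Equivalence NPNEquiv4 ∧
    Set.ncard {C : Set ((Fin 4 → Bool) → Bool) |
      ∃ f : (Fin 4 → Bool) → Bool, C = {g | NPNEquiv4 f g}} = 222 := by
  refine ⟨npn_equivalence, ?_⟩
  rw [← card_orbits_npn, ← Nat.card_coe_set_eq]
  symm
  let r : Quotient (MulAction.orbitRel NPNGrp ((Fin 4 → Bool) → Bool)) →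
      {C : Set ((Fin 4 → Bool) → Bool) | ∃ f, C = {g | NPNEquiv4 f g}} :=
    Quotient.lift (fun f => ⟨{g | NPNEquiv4 f g}, f, rfl⟩) (by
      intro f f' hff
      have hff : NPNEquiv4 f' f := (npn_iff_mem_orbit _ _).2 hff
      apply Subtype.ext
      ext g
      exact ⟨fun h => npn_equivalence.trans hff h,
        fun h => npn_equivalence.trans (npn_equivalence.symm hff) h⟩)
  refine Nat.card_eq_of_bijective r ⟨?_, ?_⟩
  · intro p q
    induction p using Quotient.inductionOn with | _ f
    induction q using Quotient.inductionOn with | _ f'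
    intro h
    have h' : {g | NPNEquiv4 f g} = {g | NPNEquiv4 f' g} := congrArg Subtype.val h
    have hm : f ∈ {g | NPNEquiv4 f' g} := by
      rw [← h']
      exact npn_equivalence.refl f
    exact Quotient.sound ((npn_iff_mem_orbit _ _).1 hm)
  · rintro ⟨_, f, rfl⟩
    exact ⟨Quotient.mk _ f, rfl⟩
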